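/- For n ≥ 0 and α > -1, ∫_{-1}^1 x · P̃_n^{(α,α)}(x) · (P̃_n^{(α,α)})'(x) · (1-x²)^α dx = n, where P̃_n^{(α,α)} is the Jacobi polynomial normalized to have unit norm in L²([-1,1],(1-x²)^α). -/

import Mathlib

open Real MeasureTheory

/-- The Jacobi polynomial `P_n^{(α,α)}`, defined through the three-term recurrence
`P_{k+1}(x) = A_k x P_k(x) - C_k P_{k-1}(x)` (the middle coefficient `B_k` vanishes
when `β = α`). -/
noncomputable def jacobiP (α : ℝ) : ℕ → ℝ → ℝ
  | 0, _ => 1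
  | 1, x => (α + 1) * x
  | (n + 2), x =>
      ((2 * ((n : ℝ) + 1) + 2 * α + 1) * (2 * ((n : ℝ) + 1) + 2 * α + 2) /
          (2 * ((n : ℝ) + 2) * (((n : ℝ) + 1) + 2 * α + 1)) * x) * jacobiP α (n + 1) x -
        (((n : ℝ) + 1 + α) ^ 2 * (2 * ((n : ℝ) + 1) + 2 * α + 2) /
          (((n : ℝ) + 2) * (((n : ℝ) + 1) + 2 * α + 1) * (2 * ((n : ℝ) + 1) + 2 * α))) *
          jacobiP α n x

/-- The squared weighted `L²` norm `h_n^{(α,α)}` of the Jacobi polynomial `P_n^{(α,α)}`. -/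
noncomputable def jacobiH (α : ℝ) (n : ℕ) : ℝ :=
  (2 : ℝ) ^ (2 * α + 1) * Real.Gamma (n + α + 1) ^ 2 /
    (n.factorial * (2 * n + 2 * α + 1) * Real.Gamma (n + 2 * α + 1))

/-- The normalized Jacobi polynomial `P̃_n^{(α,α)}`, with unit norm in
`L²([-1,1], (1-x²)^α dx)`. -/
noncomputable def normJacobiP (α : ℝ) (n : ℕ) (x : ℝ) : ℝ :=
  jacobiP α n x / Real.sqrt (jacobiH α n)

/-!
If `p` has degree `n`, the leading terms of `x p'` and `n p` agree, so `x p' - n p` has degree less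
than `n`. For a polynomial `p` orthogonal to everything of smaller degree this gives
`⟨x p', p⟩ = n ⟨p, p⟩`, and normalizing `p` leaves `n`.

Orthogonality of the `P_n^{(α,α)}` holds because they are eigenfunctions, with distinct
eigenvalues, of the Gegenbauer operator, which is symmetric for the weight `(1 - x²)^α`. Pairing the
three-term recurrence with suitable members of the family then gives a first-order recurrence for
`⟨P_n, P_n⟩`, which `h_n` also satisfies.
-/

open Polynomial

section OrthogonalPolynomials

theorem coeff_X_mul_derivative {R : Type*} [Semiring R] (p : R[X]) (k : ℕ) :
    (X * derivative p).coeff k = k * p.coeff k := by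
  cases k with
  | zero => simp
  | succ k => rw [coeff_X_mul, coeff_derivative, ← Nat.cast_succ, Nat.cast_comm]

theorem degree_X_mul_derivative_sub_lt {R : Type*} [Ring R] {p : R[X]} (hp : p ≠ 0) :
    (X * derivative p - p.natDegree • p).degree < p.degree := by
  rw [degree_eq_natDegree hp, degree_lt_iff_coeff_zero]
  intro k hk
  rw [coeff_sub, coeff_smul, coeff_X_mul_derivative, nsmul_eq_mul]
  rcases hk.eq_or_lt with rfl | hlt
  · exact sub_self _
  · rw [coeff_eq_zero_of_natDegree_lt hlt, mul_zero, mul_zero, sub_zero]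

variable {R M : Type*} [CommRing R] [AddCommGroup M] [Module R M] (L : R[X] →ₗ[R] M)

theorem map_X_mul_derivative_mul_self {p : R[X]}
    (hp : ∀ q : R[X], q.degree < p.degree → L (q * p) = 0) :
    L (X * derivative p * p) = p.natDegree • L (p * p) := by
  rcases eq_or_ne p 0 with rfl | hp₀
  · simp
  · have h := hp _ (degree_X_mul_derivative_sub_lt hp₀)
    rwa [sub_mul, map_sub, smul_mul_assoc, map_nsmul, sub_eq_zero] at h

theorem map_mul_eq_zero_of_degree_lt (S : Polynomial.Sequence R)
    (hS : ∀ k, IsUnit (S k).leadingCoeff) {p : R[X]} {n : ℕ}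
    (horth : ∀ k < n, L (S k * p) = 0) {q : R[X]} (hq : q.degree < n) : L (q * p) = 0 := by
  have hspan : q ∈ Submodule.span R (S '' Set.Iio n) :=
    S.span_degreeLT (m := n) (fun k _ => hS k) ▸ mem_degreeLT.mpr hq
  have hle : Submodule.span R (S '' Set.Iio n) ≤ LinearMap.ker (L ∘ₗ LinearMap.mulRight R p) :=
    Submodule.span_le.mpr (Set.forall_mem_image.mpr horth)
  exact hle hspan

end OrthogonalPolynomials

section JacobiPolynomials

/-- The Jacobi polynomial `P_n^{(α,α)}` as an element of `ℝ[X]`. The recurrence is that of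
`jacobiP` after cancelling the factors `2n + 2α + 2` and `2`, which needs `-1 < α`. -/
noncomputable def jacobiPoly (α : ℝ) : ℕ → ℝ[X]
  | 0 => 1
  | 1 => (α + 1) • X
  | n + 2 =>
      ((2 * n + 2 * α + 3) * (n + α + 2) / ((n + 2) * (n + 2 * α + 2))) •
          (X * jacobiPoly α (n + 1)) -
        ((n + α + 1) * (n + α + 2) / ((n + 2) * (n + 2 * α + 2))) • jacobiPoly α n

variable {α : ℝ} (hα : -1 < α)

@[simp]
theorem jacobiPoly_zero : jacobiPoly α 0 = 1 := rfl

@[simp]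
theorem jacobiPoly_one : jacobiPoly α 1 = (α + 1) • X := rfl

/-- The Gegenbauer differential operator `(1 - x²) d²/dx² - 2 (α + 1) x d/dx`, whose
eigenfunctions are the polynomials `P_n^{(α,α)}`. -/
noncomputable def gegenbauerOp (α : ℝ) (p : ℝ[X]) : ℝ[X] :=
  (1 - X ^ 2) * derivative (derivative p) - (2 * (α + 1)) • (X * derivative p)

include hα

theorem eval_jacobiPoly (n : ℕ) (x : ℝ) : (jacobiPoly α n).eval x = jacobiP α n x := by
  induction n using Nat.twoStepInduction with
  | zero => simp [jacobiP]
  | one => simp [jacobiP]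
  | more n ih₀ ih₁ =>
    have : (0 : ℝ) ≤ n := n.cast_nonneg
    have h₁ : (n : ℝ) + 2 * α + 2 ≠ 0 := by linarith
    have h₂ : (n : ℝ) + 1 + 2 * α + 1 ≠ 0 := by linarith
    simp only [jacobiPoly, jacobiP, eval_sub, eval_smul, eval_mul, eval_X, smul_eq_mul, ih₀, ih₁]
    rw [← mul_assoc]
    congr 2
    · field_simp
      ring
    · field_simp
      ring

theorem jacobiPoly_recurrence_coeff_ne_zero (n : ℕ) : ((n : ℝ) + 2) * (n + 2 * α + 2) ≠ 0 := by
  have : (0 : ℝ) ≤ n := n.cast_nonneg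
  exact mul_ne_zero (by linarith) (by linarith)

theorem jacobiPoly_recurrence (n : ℕ) :
    (((n : ℝ) + 2) * (n + 2 * α + 2)) • jacobiPoly α (n + 2) =
      ((2 * n + 2 * α + 3) * (n + α + 2)) • (X * jacobiPoly α (n + 1)) -
        ((n + α + 1) * (n + α + 2)) • jacobiPoly α n := by
  have hcoeff := jacobiPoly_recurrence_coeff_ne_zero hα n
  rw [jacobiPoly, smul_sub, smul_smul, smul_smul, mul_div_cancel₀ _ hcoeff,
    mul_div_cancel₀ _ hcoeff]

theorem degree_jacobiPoly (n : ℕ) : (jacobiPoly α n).degree = n := by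
  induction n using Nat.twoStepInduction with
  | zero => exact degree_one
  | one => rw [jacobiPoly_one, smul_eq_C_mul, degree_C_mul_X (by linarith), Nat.cast_one]
  | more n ih₀ ih₁ =>
    have : (0 : ℝ) ≤ n := n.cast_nonneg
    have h₁ : (n : ℝ) + α + 2 ≠ 0 := by linarith
    have h₂ : (n : ℝ) + 2 * α + 2 ≠ 0 := by linarith
    have h₃ : 2 * (n : ℝ) + 2 * α + 3 ≠ 0 := by linarith
    have hlead : (((2 * (n : ℝ) + 2 * α + 3) * (n + α + 2) / ((n + 2) * (n + 2 * α + 2))) •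
        (X * jacobiPoly α (n + 1))).degree = ((n + 2 : ℕ) : WithBot ℕ) := by
      rw [smul_eq_C_mul, degree_C_mul (by positivity), degree_mul, degree_X, ih₁]
      norm_cast
      lia
    rw [jacobiPoly, degree_sub_eq_left_of_degree_lt, hlead]
    refine (degree_smul_le _ _).trans_lt ?_
    rw [ih₀, hlead]
    exact Nat.cast_lt.mpr (by lia)

/-- The Jacobi polynomials `P_n^{(α,α)}` as a polynomial sequence: the `n`-th has degree `n`. -/
noncomputable def jacobiSequence : Polynomial.Sequence ℝ where
  elems' := jacobiPoly α
  degree_eq' := degree_jacobiPoly hα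

theorem one_sub_X_sq_mul_derivative_jacobiPoly_succ (n : ℕ) :
    (1 - X ^ 2) * derivative (jacobiPoly α (n + 1)) =
      (n + α + 1) • jacobiPoly α n - ((n : ℝ) + 1) • (X * jacobiPoly α (n + 1)) := by
  induction n using Nat.twoStepInduction with
  | zero =>
    simp only [zero_add, jacobiPoly_zero, jacobiPoly_one, derivative_smul, derivative_X]
    simp only [smul_eq_C_mul, C_add, C_1, Nat.cast_zero, C_0]
    ring
  | one =>
    have hrec := jacobiPoly_recurrence hα 0
    have hder := congrArg derivative hrec
    apply smul_right_injective _ (jacobiPoly_recurrence_coeff_ne_zero hα 0)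
    simp only [zero_add, jacobiPoly_zero, jacobiPoly_one, derivative_mul, derivative_sub,
      derivative_smul, derivative_X, derivative_one] at hder hrec ⊢
    simp only [smul_eq_C_mul, C_mul, C_add, C_1, C_0, C_ofNat, Nat.cast_zero, Nat.cast_one]
      at hder hrec ⊢
    linear_combination (1 - X ^ 2) * hder + 2 * X * hrec
  | more n ih₀ ih₁ =>
    have hrec₀ := jacobiPoly_recurrence hα n
    have hrec₁ := jacobiPoly_recurrence hα (n + 1)
    have hder := congrArg derivative hrec₁
    apply smul_right_injective _ (jacobiPoly_recurrence_coeff_ne_zero hα (n + 1))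
    simp only [derivative_mul, derivative_sub, derivative_smul, derivative_X] at hder
    simp only [smul_eq_C_mul, C_mul, C_add, C_1, C_ofNat, map_natCast, Nat.cast_add, Nat.cast_one]
      at hder hrec₀ hrec₁ ih₀ ih₁ ⊢
    -- The differentiated recurrence times `1 - x²`; `ih₁` and `ih₀` remove the derivatives, the
    -- recurrences remove `P_{n+3}` and `P_n`.
    linear_combination (1 - X ^ 2) * hder + (n + 3) * X * hrec₁ +
      (2 * n + 2 * C α + 5) * (n + C α + 3) * X * ih₁ -
      (n + C α + 2) * (n + C α + 3) * ih₀ - (n + C α + 3) * hrec₀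

theorem smul_one_sub_X_sq_mul_derivative_jacobiPoly (n : ℕ) :
    (n + α + 1) • ((1 - X ^ 2) * derivative (jacobiPoly α n)) =
      (n + 2 * α + 1) • ((n + α + 1) • (X * jacobiPoly α n) -
        ((n : ℝ) + 1) • jacobiPoly α (n + 1)) := by
  cases n with
  | zero => simp
  | succ n =>
    have hlower := one_sub_X_sq_mul_derivative_jacobiPoly_succ hα n
    have hrec := jacobiPoly_recurrence hα n
    simp only [smul_eq_C_mul, C_mul, C_add, C_1, C_ofNat, map_natCast, Nat.cast_add,
      Nat.cast_one] at hlower hrec ⊢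
    linear_combination (n + C α + 2) * hlower + hrec

theorem gegenbauerOp_jacobiPoly (n : ℕ) :
    gegenbauerOp α (jacobiPoly α n) = -(n * (n + 2 * α + 1)) • jacobiPoly α n := by
  cases n with
  | zero => simp [gegenbauerOp]
  | succ n =>
    have hlower := one_sub_X_sq_mul_derivative_jacobiPoly_succ hα n
    have hraise := smul_one_sub_X_sq_mul_derivative_jacobiPoly hα n
    have hder := congrArg derivative hlower
    have hX : (1 - X ^ 2 : ℝ[X]) ≠ 0 := fun h => by simpa using congrArg (eval 0) h
    apply mul_left_cancel₀ hX
    simp only [derivative_mul, derivative_sub, derivative_smul, derivative_X, derivative_one,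
      derivative_X_pow] at hder
    simp only [gegenbauerOp, smul_eq_C_mul, C_mul, C_add, C_neg, C_1, C_ofNat, map_natCast,
      Nat.cast_add, Nat.cast_one, Nat.cast_ofNat] at hder hlower hraise ⊢
    linear_combination (1 - X ^ 2) * hder + hraise - (n + 1 + 2 * C α) * X * hlower

end JacobiPolynomials

section BetaIntegral

theorem ofReal_rpow_mul_one_sub_rpow (u v : ℝ) {x : ℝ} (hx : x ∈ Set.Icc (0 : ℝ) 1) :
    ((x ^ (u - 1) * (1 - x) ^ (v - 1) : ℝ) : ℂ) =
      (x : ℂ) ^ ((u : ℂ) - 1) * (1 - (x : ℂ)) ^ ((v : ℂ) - 1) := by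
  rw [Complex.ofReal_mul, Complex.ofReal_cpow hx.1, Complex.ofReal_cpow (sub_nonneg.mpr hx.2)]
  push_cast
  rfl

variable {u v : ℝ} (hu : 0 < u) (hv : 0 < v)
include hu hv

theorem intervalIntegrable_rpow_mul_one_sub_rpow :
    IntervalIntegrable (fun x : ℝ => x ^ (u - 1) * (1 - x) ^ (v - 1)) volume 0 1 := by
  have h := Complex.betaIntegral_convergent (u := u) (v := v) (by simpa) (by simpa)
  rw [intervalIntegrable_iff_integrableOn_Ioc_of_le zero_le_one] at h ⊢
  exact (integrableOn_congr_fun (fun x hx => by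
    rw [← ofReal_rpow_mul_one_sub_rpow u v (Set.Ioc_subset_Icc_self hx)]
    exact Complex.ofReal_re _) measurableSet_Ioc).mp h.re

theorem integral_rpow_mul_one_sub_rpow :
    ∫ x in (0 : ℝ)..1, x ^ (u - 1) * (1 - x) ^ (v - 1) = Gamma u * Gamma v / Gamma (u + v) := by
  have h := Complex.betaIntegral_eq_Gamma_mul_div u v (by simpa) (by simpa)
  rw [Complex.betaIntegral, ← Complex.ofReal_add, Complex.Gamma_ofReal, Complex.Gamma_ofReal,
    Complex.Gamma_ofReal, ← intervalIntegral.integral_congr (fun x hx =>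
      ofReal_rpow_mul_one_sub_rpow u v (Set.uIcc_of_le (zero_le_one' ℝ) ▸ hx)),
    intervalIntegral.integral_ofReal] at h
  exact_mod_cast h

end BetaIntegral

section JacobiWeight

variable {α : ℝ} (hα : -1 < α)

theorem one_sub_sq_rpow_eq (α : ℝ) {x : ℝ} (hx : x ∈ Set.Icc (-1 : ℝ) 1) :
    (1 - x ^ 2) ^ α = 4 ^ α * ((2⁻¹ * x + 2⁻¹) ^ α * (1 - (2⁻¹ * x + 2⁻¹)) ^ α) := by
  have hleft : 0 ≤ 2⁻¹ * x + 2⁻¹ := by linarith [hx.1]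
  have hright : 0 ≤ 1 - (2⁻¹ * x + 2⁻¹) := by linarith [hx.2]
  rw [← mul_rpow hleft hright, ← mul_rpow zero_le_four (mul_nonneg hleft hright)]
  congr 1
  ring

theorem hasDerivAt_eval_mul_one_sub_sq_rpow (α : ℝ) (p : ℝ[X]) {x : ℝ}
    (hx : x ∈ Set.Ioo (-1 : ℝ) 1) :
    HasDerivAt (fun x : ℝ => p.eval x * (1 - x ^ 2) ^ (α + 1))
      (((1 - X ^ 2) * derivative p - (2 * (α + 1)) • (X * p)).eval x * (1 - x ^ 2) ^ α) x := by
  have hpos : 0 < 1 - x ^ 2 := by nlinarith [hx.1, hx.2]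
  have hbase : HasDerivAt (fun x : ℝ => 1 - x ^ 2) (-(2 * x)) x := by
    simpa using (hasDerivAt_pow 2 x).const_sub 1
  refine ((p.hasDerivAt x).mul (hbase.rpow_const (p := α + 1) (Or.inl hpos.ne'))).congr_deriv ?_
  rw [add_sub_cancel_right, rpow_add_one hpos.ne']
  simp only [eval_sub, eval_mul, eval_smul, eval_one, eval_pow, eval_X, smul_eq_mul]
  ring

include hα

theorem intervalIntegrable_one_sub_sq_rpow :
    IntervalIntegrable (fun x : ℝ => (1 - x ^ 2) ^ α) volume (-1) 1 := by
  have hα' : 0 < α + 1 := by linarith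
  have hbeta := intervalIntegrable_rpow_mul_one_sub_rpow hα' hα'
  rw [add_sub_cancel_right] at hbeta
  have hscaled := ((hbeta.comp_add_right 2⁻¹).comp_mul_left (c := 2⁻¹)).const_mul (4 ^ α)
  rw [show (0 - 2⁻¹) / 2⁻¹ = (-1 : ℝ) by norm_num, show (1 - 2⁻¹) / 2⁻¹ = (1 : ℝ) by norm_num]
    at hscaled
  exact hscaled.congr fun x hx => (one_sub_sq_rpow_eq α (Set.Ioc_subset_Icc_self
    (Set.uIoc_of_le (by norm_num : (-1 : ℝ) ≤ 1) ▸ hx))).symm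

theorem integral_one_sub_sq_rpow :
    ∫ x in (-1 : ℝ)..1, (1 - x ^ 2) ^ α =
      2 ^ (2 * α + 1) * Gamma (α + 1) ^ 2 / Gamma (2 * α + 2) := by
  have hα' : 0 < α + 1 := by linarith
  have hbeta := integral_rpow_mul_one_sub_rpow hα' hα'
  rw [add_sub_cancel_right] at hbeta
  have hpow : (2 : ℝ) ^ (2 * α + 1) = 4 ^ α * 2 := by
    rw [rpow_add_one two_ne_zero, rpow_mul zero_le_two]
    norm_num
  rw [intervalIntegral.integral_congr (fun x hx =>
      one_sub_sq_rpow_eq α (Set.uIcc_of_le (by norm_num : (-1 : ℝ) ≤ 1) ▸ hx)),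
    intervalIntegral.integral_const_mul,
    intervalIntegral.integral_comp_mul_add (fun t : ℝ => t ^ α * (1 - t) ^ α)
      (inv_ne_zero two_ne_zero),
    (by norm_num : (2⁻¹ : ℝ) * -1 + 2⁻¹ = 0), (by norm_num : (2⁻¹ : ℝ) * 1 + 2⁻¹ = 1),
    hbeta, hpow, smul_eq_mul, inv_inv, (by ring : α + 1 + (α + 1) = 2 * α + 2)]
  ring

theorem intervalIntegrable_eval_mul_one_sub_sq_rpow (p : ℝ[X]) :
    IntervalIntegrable (fun x : ℝ => p.eval x * (1 - x ^ 2) ^ α) volume (-1) 1 :=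
  (intervalIntegrable_one_sub_sq_rpow hα).continuousOn_mul p.continuousOn

/-- Integration of polynomials against the weight `(1 - x²)^α` on `[-1, 1]`, as a linear
functional; integrability of the weight requires `-1 < α`. -/
noncomputable def jacobiIntegral : ℝ[X] →ₗ[ℝ] ℝ where
  toFun p := ∫ x in (-1 : ℝ)..1, p.eval x * (1 - x ^ 2) ^ α
  map_add' p q := by
    simp only [eval_add, add_mul]
    exact intervalIntegral.integral_add (intervalIntegrable_eval_mul_one_sub_sq_rpow hα p)
      (intervalIntegrable_eval_mul_one_sub_sq_rpow hα q)
  map_smul' c p := by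
    simp only [eval_smul, smul_eq_mul, mul_assoc, intervalIntegral.integral_const_mul,
      RingHom.id_apply]

theorem jacobiIntegral_apply (p : ℝ[X]) :
    jacobiIntegral hα p = ∫ x in (-1 : ℝ)..1, p.eval x * (1 - x ^ 2) ^ α := rfl

theorem jacobiIntegral_one :
    jacobiIntegral hα 1 = 2 ^ (2 * α + 1) * Gamma (α + 1) ^ 2 / Gamma (2 * α + 2) := by
  simp only [jacobiIntegral_apply, eval_one, one_mul, integral_one_sub_sq_rpow hα]

-- Integration by parts: the boundary terms carry the factor `(1 - x²)^(α + 1)`, which vanishes.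
theorem jacobiIntegral_one_sub_X_sq_mul_derivative (p : ℝ[X]) :
    jacobiIntegral hα ((1 - X ^ 2) * derivative p) =
      2 * (α + 1) * jacobiIntegral hα (X * p) := by
  have hα' : 0 < α + 1 := by linarith
  have hcont : ContinuousOn (fun x : ℝ => p.eval x * (1 - x ^ 2) ^ (α + 1)) (Set.Icc (-1) 1) :=
    p.continuousOn.mul (ContinuousOn.rpow_const (by fun_prop) fun _ _ => Or.inr hα'.le)
  have hftc := intervalIntegral.integral_eq_sub_of_hasDerivAt_of_le (by norm_num) hcont
    (fun x hx => hasDerivAt_eval_mul_one_sub_sq_rpow α p hx)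
    (intervalIntegrable_eval_mul_one_sub_sq_rpow hα _)
  rw [← jacobiIntegral_apply hα, map_sub, map_smul, smul_eq_mul] at hftc
  simpa [zero_rpow hα'.ne', sub_eq_zero] using hftc

theorem jacobiIntegral_gegenbauerOp_mul (p q : ℝ[X]) :
    jacobiIntegral hα (gegenbauerOp α p * q) =
      -jacobiIntegral hα ((1 - X ^ 2) * (derivative p * derivative q)) := by
  have hparts := jacobiIntegral_one_sub_X_sq_mul_derivative hα (derivative p * q)
  have hsplit : gegenbauerOp α p * q = (1 - X ^ 2) * derivative (derivative p * q) -
      (1 - X ^ 2) * (derivative p * derivative q) - (2 * (α + 1)) • (X * (derivative p * q)) := by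
    simp only [gegenbauerOp, derivative_mul, smul_eq_C_mul]
    ring
  rw [hsplit, map_sub, map_sub, map_smul, hparts, smul_eq_mul]
  ring

theorem jacobiIntegral_gegenbauerOp_mul_comm (p q : ℝ[X]) :
    jacobiIntegral hα (gegenbauerOp α p * q) = jacobiIntegral hα (p * gegenbauerOp α q) := by
  rw [mul_comm p, jacobiIntegral_gegenbauerOp_mul, jacobiIntegral_gegenbauerOp_mul,
    mul_comm (derivative p)]

theorem jacobiIntegral_jacobiPoly_mul_of_ne {m n : ℕ} (hmn : m ≠ n) :
    jacobiIntegral hα (jacobiPoly α m * jacobiPoly α n) = 0 := by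
  have hsymm := jacobiIntegral_gegenbauerOp_mul_comm hα (jacobiPoly α m) (jacobiPoly α n)
  rw [gegenbauerOp_jacobiPoly hα, gegenbauerOp_jacobiPoly hα, smul_mul_assoc, mul_smul_comm,
    map_smul, map_smul, smul_eq_mul, smul_eq_mul] at hsymm
  have heigen : ((n : ℝ) - m) * (m + n + 2 * α + 1) ≠ 0 := by
    have hpos : (1 : ℝ) ≤ m + n := by exact_mod_cast (by lia : 1 ≤ m + n)
    exact mul_ne_zero (sub_ne_zero.mpr (by exact_mod_cast hmn.symm)) (by linarith)
  apply (mul_eq_zero_iff_left heigen).mp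
  linear_combination hsymm

theorem jacobiIntegral_mul_jacobiPoly_of_degree_lt {n : ℕ} {q : ℝ[X]} (hq : q.degree < n) :
    jacobiIntegral hα (q * jacobiPoly α n) = 0 :=
  map_mul_eq_zero_of_degree_lt _ (jacobiSequence hα)
    (fun k => (leadingCoeff_ne_zero.mpr ((jacobiSequence hα).ne_zero k)).isUnit)
    (fun _ hk => jacobiIntegral_jacobiPoly_mul_of_ne hα hk.ne) hq

theorem jacobiIntegral_X_mul_derivative_mul_jacobiPoly (n : ℕ) :
    jacobiIntegral hα (X * derivative (jacobiPoly α n) * jacobiPoly α n) =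
      n * jacobiIntegral hα (jacobiPoly α n * jacobiPoly α n) := by
  have hdeg := degree_jacobiPoly hα n
  rw [map_X_mul_derivative_mul_self _ fun q hq =>
      jacobiIntegral_mul_jacobiPoly_of_degree_lt hα (hdeg ▸ hq),
    natDegree_eq_of_degree_eq_some hdeg, nsmul_eq_mul]

theorem jacobiIntegral_jacobiPoly_recurrence_mul (n : ℕ) (q : ℝ[X]) :
    (n + 2) * (n + 2 * α + 2) * jacobiIntegral hα (jacobiPoly α (n + 2) * q) =
      (2 * n + 2 * α + 3) * (n + α + 2) * jacobiIntegral hα (X * jacobiPoly α (n + 1) * q) -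
        (n + α + 1) * (n + α + 2) * jacobiIntegral hα (jacobiPoly α n * q) := by
  simpa only [sub_mul, smul_mul_assoc, map_sub, map_smul, smul_eq_mul] using
    congrArg (fun p => jacobiIntegral hα (p * q)) (jacobiPoly_recurrence hα n)

theorem jacobiIntegral_X_mul_jacobiPoly_succ_mul (n : ℕ) :
    (2 * n + 2 * α + 3) * jacobiIntegral hα (X * jacobiPoly α (n + 1) * jacobiPoly α n) =
      (n + α + 1) * jacobiIntegral hα (jacobiPoly α n * jacobiPoly α n) := by
  have hrec := jacobiIntegral_jacobiPoly_recurrence_mul hα n (jacobiPoly α n)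
  rw [jacobiIntegral_jacobiPoly_mul_of_ne hα (by lia : n + 2 ≠ n)] at hrec
  have hfactor : (n : ℝ) + α + 2 ≠ 0 := by linarith [(n.cast_nonneg : (0 : ℝ) ≤ n)]
  apply mul_left_cancel₀ hfactor
  linear_combination -hrec

theorem jacobiIntegral_jacobiPoly_add_two_mul_self (n : ℕ) :
    (n + 2) * (n + 2 * α + 2) * (2 * n + 2 * α + 5) *
        jacobiIntegral hα (jacobiPoly α (n + 2) * jacobiPoly α (n + 2)) =
      (n + α + 2) ^ 2 * (2 * n + 2 * α + 3) *
        jacobiIntegral hα (jacobiPoly α (n + 1) * jacobiPoly α (n + 1)) := by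
  have hrec := jacobiIntegral_jacobiPoly_recurrence_mul hα n (jacobiPoly α (n + 2))
  rw [jacobiIntegral_jacobiPoly_mul_of_ne hα (by lia : n ≠ n + 2), mul_right_comm X] at hrec
  have hcross := jacobiIntegral_X_mul_jacobiPoly_succ_mul hα (n + 1)
  push_cast at hcross
  linear_combination (2 * n + 2 * α + 5) * hrec + (2 * n + 2 * α + 3) * (n + α + 2) * hcross

end JacobiWeight

section JacobiNorm

variable {α : ℝ} (hα : -1 < α)
include hα

-- At `α = -1/2`, `n = 0` the denominator of `jacobiH` is `0 * Gamma 0 = 0`, so `jacobiH α n` is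
-- the squared norm for every `-1 < α` only when `n` is a successor.
theorem jacobiH_succ_pos (n : ℕ) : 0 < jacobiH α (n + 1) := by
  have : (0 : ℝ) ≤ n := n.cast_nonneg
  have h₁ : 0 < Gamma ((n + 1 : ℕ) + α + 1) := Gamma_pos_of_pos (by push_cast; linarith)
  have h₂ : 0 < Gamma ((n + 1 : ℕ) + 2 * α + 1) := Gamma_pos_of_pos (by push_cast; linarith)
  have h₃ : 0 < 2 * ((n + 1 : ℕ) : ℝ) + 2 * α + 1 := by push_cast; linarith
  rw [jacobiH]
  positivity

theorem jacobiH_add_two (n : ℕ) :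
    (n + 2) * (n + 2 * α + 2) * (2 * n + 2 * α + 5) * jacobiH α (n + 2) =
      (n + α + 2) ^ 2 * (2 * n + 2 * α + 3) * jacobiH α (n + 1) := by
  have : (0 : ℝ) ≤ n := n.cast_nonneg
  have h₁ : (n : ℝ) + 2 * α + 2 ≠ 0 := by linarith
  have h₂ : (n : ℝ) + α + 2 ≠ 0 := by linarith
  have hΓ₁ : Gamma (n + α + 3) = (n + α + 2) * Gamma (n + α + 2) := by
    rw [← Gamma_add_one h₂]
    ring_nf
  have hΓ₂ : Gamma (n + 2 * α + 3) = (n + 2 * α + 2) * Gamma (n + 2 * α + 2) := by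
    rw [← Gamma_add_one h₁]
    ring_nf
  have hsucc : jacobiH α (n + 1) = 2 ^ (2 * α + 1) * Gamma (n + α + 2) ^ 2 /
      ((n + 1).factorial * (2 * n + 2 * α + 3) * Gamma (n + 2 * α + 2)) := by
    rw [jacobiH]
    push_cast
    ring_nf
  have hadd : jacobiH α (n + 2) = 2 ^ (2 * α + 1) * Gamma (n + α + 3) ^ 2 /
      ((n + 2) * (n + 1).factorial * (2 * n + 2 * α + 5) * Gamma (n + 2 * α + 3)) := by
    rw [jacobiH, Nat.factorial_succ (n + 1)]
    push_cast
    ring_nf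
  have hfac : ((n + 1).factorial : ℝ) ≠ 0 := by positivity
  have hΓ : Gamma (n + 2 * α + 2) ≠ 0 := (Gamma_pos_of_pos (by linarith)).ne'
  have h₃ : 2 * ((n : ℝ) + α) + 3 ≠ 0 := by linarith
  have h₄ : 2 * ((n : ℝ) + α) + 5 ≠ 0 := by linarith
  rw [hsucc, hadd, hΓ₁, hΓ₂]
  field_simp

theorem jacobiIntegral_jacobiPoly_one_mul_self :
    jacobiIntegral hα (jacobiPoly α 1 * jacobiPoly α 1) = jacobiH α 1 := by
  have hparts := jacobiIntegral_one_sub_X_sq_mul_derivative hα X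
  rw [derivative_X, mul_one, map_sub, jacobiIntegral_one, pow_two X] at hparts
  have h₃ : 2 * α + 3 ≠ 0 := by linarith
  have hXX : jacobiIntegral hα (X * X) =
      2 ^ (2 * α + 1) * Gamma (α + 1) ^ 2 / Gamma (2 * α + 2) / (2 * α + 3) := by
    rw [eq_div_iff h₃]
    linear_combination -hparts
  have hH : jacobiH α 1 = (α + 1) * (α + 1) *
      (2 ^ (2 * α + 1) * Gamma (α + 1) ^ 2 / Gamma (2 * α + 2) / (2 * α + 3)) := by
    rw [jacobiH, Nat.cast_one, add_comm 1 α, Gamma_add_one (by linarith : α + 1 ≠ 0),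
      Nat.factorial_one, Nat.cast_one, (by ring : 1 + 2 * α + 1 = 2 * α + 2), div_div,
      ← mul_div_assoc]
    ring_nf
  rw [hH, jacobiPoly_one, smul_mul_smul_comm, map_smul, smul_eq_mul, hXX]

theorem jacobiIntegral_jacobiPoly_succ_mul_self (n : ℕ) :
    jacobiIntegral hα (jacobiPoly α (n + 1) * jacobiPoly α (n + 1)) = jacobiH α (n + 1) := by
  induction n with
  | zero => exact jacobiIntegral_jacobiPoly_one_mul_self hα
  | succ n ih =>
    have : (0 : ℝ) ≤ n := n.cast_nonneg
    have hcoeff : ((n : ℝ) + 2) * (n + 2 * α + 2) * (2 * n + 2 * α + 5) ≠ 0 :=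
      mul_ne_zero (jacobiPoly_recurrence_coeff_ne_zero hα n) (by linarith)
    apply mul_left_cancel₀ hcoeff
    rw [jacobiIntegral_jacobiPoly_add_two_mul_self, jacobiH_add_two hα, ih]

end JacobiNorm

theorem deriv_normJacobiP {α : ℝ} (hα : -1 < α) (n : ℕ) (x : ℝ) :
    deriv (normJacobiP α n) x = (derivative (jacobiPoly α n)).eval x / √(jacobiH α n) := by
  have hfun : normJacobiP α n = fun y => (jacobiPoly α n).eval y / √(jacobiH α n) :=
    funext fun y => by rw [normJacobiP, eval_jacobiPoly hα]
  rw [hfun, deriv_div_const, Polynomial.deriv]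

theorem F_n_zero (α : ℝ) (hα : -1 < α) (n : ℕ) :
    ∫ x in (-1 : ℝ)..1, x * normJacobiP α n x * deriv (normJacobiP α n) x * (1 - x ^ 2) ^ α =
      (n : ℝ) := by
  cases n with
  | zero => simp [deriv_normJacobiP hα]
  | succ n =>
    have hpos := jacobiH_succ_pos hα n
    have hintegrand (x : ℝ) : x * normJacobiP α (n + 1) x * deriv (normJacobiP α (n + 1)) x *
        (1 - x ^ 2) ^ α = (X * derivative (jacobiPoly α (n + 1)) * jacobiPoly α (n + 1)).eval x *
          (1 - x ^ 2) ^ α / jacobiH α (n + 1) := by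
      rw [deriv_normJacobiP hα, normJacobiP, ← eval_jacobiPoly hα, eval_mul, eval_mul, eval_X]
      field_simp
      rw [sq_sqrt hpos.le]
      ring
    simp only [hintegrand]
    rw [intervalIntegral.integral_div, ← jacobiIntegral_apply hα,
      jacobiIntegral_X_mul_derivative_mul_jacobiPoly, jacobiIntegral_jacobiPoly_succ_mul_self,
      mul_div_cancel_right₀ _ hpos.ne']
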